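/- Let λ > λ' > 1 and let ĥ_0(ω) := λ sin(ω/(2λ)) / (λ' sin(ω/(2λ'))) for ω not a nonzero multiple of 2πλ', with ĥ_0(0) := 1. Then the derivative ĥ_0'(ω) = (λ' sin(ω/(2λ')) cos(ω/(2λ)) − λ sin(ω/(2λ)) cos(ω/(2λ'))) / (2 λ'² sin²(ω/(2λ'))) satisfies |ĥ_0'(ω)| ≤ 1/2 for all ω with |ω| ≤ λ'π; in particular |ĥ_0'(±λ'π)| = cos(λ'π/(2λ))/(2λ') ≤ 1/2. -/

import Mathlib

noncomputable section
open scoped Real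

/-- `ĥ₀(ω) = λ sin(ω/(2λ)) / (λ' sin(ω/(2λ')))`, with `ĥ₀(0) = 1`. -/
def hhat0 (lam lam' ω : ℝ) : ℝ :=
  if ω = 0 then 1
  else (lam * Real.sin (ω / (2 * lam))) / (lam' * Real.sin (ω / (2 * lam')))

/-!
With `r = λ'/λ` and `t = ω/(2λ')`, the function `ĥ₀` is a multiple of `sin (r t) / sin t`, whose
derivative is `W t / sin² t` for `W t = r cos (r t) sin t - sin (r t) cos t`. As
`W' t = (1 - r²) sin (r t) sin t ≥ 0`, the function `W` is nonnegative. The derivative of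
`W / sin²` has the sign of `W' sin t - 2 W cos t`, which vanishes at `0` and has the derivative
`(1 - r²) r cos (r t) sin² t + 2 W sin t ≥ 0`. Hence `ĥ₀'` increases on `(0, λ'π]`, and as `ĥ₀` is
even, `|ĥ₀'|` is largest at the endpoints `±λ'π`.
-/

open Set

lemma nonneg_of_hasDerivAt_nonneg {f f' : ℝ → ℝ} {a b : ℝ} (ha : 0 ≤ f a)
    (hf : ∀ x ∈ Icc a b, HasDerivAt f (f' x) x) (hf' : ∀ x ∈ Icc a b, 0 ≤ f' x)
    {t : ℝ} (ht : t ∈ Icc a b) : 0 ≤ f t := by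
  have hmono : MonotoneOn f (Icc a b) :=
    monotoneOn_of_hasDerivWithinAt_nonneg (convex_Icc a b)
      (fun x hx ↦ (hf x hx).continuousAt.continuousWithinAt)
      (fun x hx ↦ (hf x (interior_subset hx)).hasDerivWithinAt)
      (fun x hx ↦ hf' x (interior_subset hx))
  exact ha.trans (hmono (left_mem_Icc.2 (ht.1.trans ht.2)) ht ht.1)

lemma hasDerivAt_sin_const_mul (r t : ℝ) :
    HasDerivAt (fun x ↦ Real.sin (r * x)) (r * Real.cos (r * t)) t := by
  simpa [mul_comm] using (hasDerivAt_const_mul r).sin (x := t)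

lemma hasDerivAt_cos_const_mul (r t : ℝ) :
    HasDerivAt (fun x ↦ Real.cos (r * x)) (-(r * Real.sin (r * t))) t := by
  simpa [mul_comm] using (hasDerivAt_const_mul r).cos (x := t)

lemma differentiableAt_sinc_zero : DifferentiableAt ℝ Real.sinc 0 := by
  obtain ⟨p, hp⟩ : AnalyticAt ℝ Real.sin 0 := Real.analyticAt_sin
  rw [Real.sinc_eq_dslope]
  exact hp.has_fpower_series_dslope_fslope.differentiableAt

lemma mul_mem_Icc_zero {r t b : ℝ} (hr : r ∈ Icc 0 1) (ht : t ∈ Icc 0 b) : r * t ∈ Icc 0 b :=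
  ⟨mul_nonneg hr.1 ht.1, (mul_le_of_le_one_left ht.1 hr.2).trans ht.2⟩

lemma sin_pos_of_mem_Ioc_pi_div_two {t : ℝ} (ht : t ∈ Ioc 0 (π / 2)) : 0 < Real.sin t :=
  Real.sin_pos_of_pos_of_lt_pi ht.1 (ht.2.trans_lt (half_lt_self Real.pi_pos))

/-- The Wronskian of `t ↦ sin t` and `t ↦ sin (r t)`, which is the numerator of the derivative of
`t ↦ sin (r t) / sin t`. -/
def sinWronskian (r t : ℝ) : ℝ :=
  r * Real.cos (r * t) * Real.sin t - Real.sin (r * t) * Real.cos t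

section SinWronskian

variable {r t : ℝ}

lemma hasDerivAt_sin_mul_div_sin (r : ℝ) (ht : Real.sin t ≠ 0) :
    HasDerivAt (fun x ↦ Real.sin (r * x) / Real.sin x) (sinWronskian r t / Real.sin t ^ 2) t :=
  (hasDerivAt_sin_const_mul r t).div (Real.hasDerivAt_sin t) ht

lemma hasDerivAt_sinWronskian (r t : ℝ) :
    HasDerivAt (sinWronskian r) ((1 - r ^ 2) * Real.sin (r * t) * Real.sin t) t := by
  refine ((((hasDerivAt_cos_const_mul r t).const_mul r).mul (Real.hasDerivAt_sin t)).sub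
    ((hasDerivAt_sin_const_mul r t).mul (Real.hasDerivAt_cos t))).congr_deriv ?_
  ring

lemma sinWronskian_zero_right (r : ℝ) : sinWronskian r 0 = 0 := by
  simp [sinWronskian]

lemma sinWronskian_pi_div_two (r : ℝ) : sinWronskian r (π / 2) = r * Real.cos (r * (π / 2)) := by
  simp [sinWronskian]

lemma one_sub_sq_mul_sin_nonneg (hr : r ∈ Icc 0 1) (ht : t ∈ Icc 0 π) :
    0 ≤ (1 - r ^ 2) * Real.sin (r * t) :=
  mul_nonneg (sub_nonneg.2 (pow_le_one₀ hr.1 hr.2))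
    (Real.sin_nonneg_of_mem_Icc (mul_mem_Icc_zero hr ht))

lemma sinWronskian_nonneg (hr : r ∈ Icc 0 1) (ht : t ∈ Icc 0 π) : 0 ≤ sinWronskian r t :=
  nonneg_of_hasDerivAt_nonneg (sinWronskian_zero_right r).ge (fun x _ ↦ hasDerivAt_sinWronskian r x)
    (fun _ hx ↦ mul_nonneg (one_sub_sq_mul_sin_nonneg hr hx) (Real.sin_nonneg_of_mem_Icc hx)) ht

lemma two_mul_sinWronskian_mul_cos_le (hr : r ∈ Icc 0 1) (ht : t ∈ Icc 0 (π / 2)) :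
    2 * sinWronskian r t * Real.cos t ≤ (1 - r ^ 2) * Real.sin (r * t) * Real.sin t ^ 2 := by
  have hderiv (x : ℝ) : HasDerivAt
      (fun x ↦ (1 - r ^ 2) * Real.sin (r * x) * Real.sin x ^ 2
        - 2 * sinWronskian r x * Real.cos x)
      ((1 - r ^ 2) * (r * Real.cos (r * x)) * Real.sin x ^ 2
        + 2 * sinWronskian r x * Real.sin x) x := by
    refine ((((hasDerivAt_sin_const_mul r x).const_mul (1 - r ^ 2)).mul
      ((Real.hasDerivAt_sin x).fun_pow 2)).sub
      (((hasDerivAt_sinWronskian r x).const_mul 2).mul (Real.hasDerivAt_cos x))).congr_deriv ?_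
    push_cast
    ring
  suffices hderiv_nonneg : ∀ x ∈ Icc 0 (π / 2),
      0 ≤ (1 - r ^ 2) * (r * Real.cos (r * x)) * Real.sin x ^ 2
        + 2 * sinWronskian r x * Real.sin x by
    have hdiff := nonneg_of_hasDerivAt_nonneg (by simp [sinWronskian_zero_right])
      (fun x _ ↦ hderiv x) hderiv_nonneg ht
    exact sub_nonneg.1 hdiff
  intro x hx
  have hxπ : x ∈ Icc 0 π := ⟨hx.1, hx.2.trans (half_le_self Real.pi_nonneg)⟩
  have hrx := mul_mem_Icc_zero hr hx
  have hr2 : 0 ≤ 1 - r ^ 2 := sub_nonneg.2 (pow_le_one₀ hr.1 hr.2)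
  have hcos : 0 ≤ Real.cos (r * x) :=
    Real.cos_nonneg_of_mem_Icc ⟨by linarith [hrx.1, Real.pi_pos], hrx.2⟩
  have hW := sinWronskian_nonneg hr hxπ
  have hsin := Real.sin_nonneg_of_mem_Icc hxπ
  have hr0 := hr.1
  positivity

lemma monotoneOn_sinWronskian_div_sin_sq (hr : r ∈ Icc 0 1) :
    MonotoneOn (fun t ↦ sinWronskian r t / Real.sin t ^ 2) (Ioc 0 (π / 2)) := by
  have hderiv (t : ℝ) (ht : t ∈ Ioc 0 (π / 2)) :
      HasDerivAt (fun t ↦ sinWronskian r t / Real.sin t ^ 2)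
        (((1 - r ^ 2) * Real.sin (r * t) * Real.sin t ^ 2 - 2 * sinWronskian r t * Real.cos t)
          / Real.sin t ^ 3) t := by
    have hsin := (sin_pos_of_mem_Ioc_pi_div_two ht).ne'
    refine ((hasDerivAt_sinWronskian r t).div ((Real.hasDerivAt_sin t).fun_pow 2)
      (pow_ne_zero 2 hsin)).congr_deriv ?_
    field_simp
    ring
  refine monotoneOn_of_hasDerivWithinAt_nonneg (convex_Ioc 0 (π / 2))
    (fun t ht ↦ (hderiv t ht).continuousAt.continuousWithinAt)
    (fun t ht ↦ (hderiv t (interior_subset ht)).hasDerivWithinAt) fun t ht ↦ ?_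
  have ht := interior_subset ht
  exact div_nonneg (sub_nonneg.2 (two_mul_sinWronskian_mul_cos_le hr (Ioc_subset_Icc_self ht)))
    (pow_nonneg (sin_pos_of_mem_Ioc_pi_div_two ht).le 3)

lemma abs_sinWronskian_div_sin_sq_le (hr : r ∈ Icc 0 1) (ht : t ∈ Ioc 0 (π / 2)) :
    |sinWronskian r t / Real.sin t ^ 2| ≤ r * Real.cos (r * (π / 2)) := by
  have hW : 0 ≤ sinWronskian r t :=
    sinWronskian_nonneg hr ⟨ht.1.le, ht.2.trans (half_le_self Real.pi_nonneg)⟩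
  rw [abs_of_nonneg (div_nonneg hW (sq_nonneg _))]
  simpa [sinWronskian_pi_div_two] using
    monotoneOn_sinWronskian_div_sin_sq hr ht (right_mem_Ioc.2 Real.pi_div_two_pos) ht.2

end SinWronskian

section Hhat0

variable {lam lam' ω : ℝ}

lemma hhat0_eq_sin_mul_div_sin (hlam : lam ≠ 0) (hlam' : lam' ≠ 0) (hω : ω ≠ 0) :
    hhat0 lam lam' ω =
      lam / lam' * (Real.sin (lam' / lam * (ω / (2 * lam'))) / Real.sin (ω / (2 * lam'))) := by
  have harg : lam' / lam * (ω / (2 * lam')) = ω / (2 * lam) := by field_simp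
  rw [hhat0, if_neg hω, harg, mul_div_mul_comm]

lemma hhat0_eq_sinc_div_sinc (hlam : lam ≠ 0) (hlam' : lam' ≠ 0) :
    hhat0 lam lam' = fun ω ↦ Real.sinc (ω / (2 * lam)) / Real.sinc (ω / (2 * lam')) := by
  funext ω
  rcases eq_or_ne ω 0 with rfl | hω
  · simp [hhat0]
  · rw [hhat0, if_neg hω, Real.sinc_of_ne_zero (by positivity),
      Real.sinc_of_ne_zero (by positivity)]
    field_simp

lemma hhat0_neg (lam lam' ω : ℝ) : hhat0 lam lam' (-ω) = hhat0 lam lam' ω := by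
  simp [hhat0, neg_div, div_neg]

lemma deriv_hhat0_neg (lam lam' ω : ℝ) :
    deriv (hhat0 lam lam') (-ω) = -deriv (hhat0 lam lam') ω := by
  have h := deriv_comp_neg (hhat0 lam lam') ω
  simp only [hhat0_neg] at h
  rw [h, neg_neg]

lemma abs_deriv_hhat0_abs (lam lam' ω : ℝ) :
    |deriv (hhat0 lam lam') (|ω|)| = |deriv (hhat0 lam lam') ω| := by
  rcases abs_choice ω with h | h <;> rw [h]
  rw [deriv_hhat0_neg, abs_neg]

lemma hasDerivAt_hhat0_zero (hlam : lam ≠ 0) (hlam' : lam' ≠ 0) :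
    HasDerivAt (hhat0 lam lam') 0 0 := by
  have hsinc (l : ℝ) : DifferentiableAt ℝ (fun ω ↦ Real.sinc (ω / (2 * l))) 0 :=
    DifferentiableAt.comp (g := Real.sinc) 0 (by simpa using differentiableAt_sinc_zero)
      (differentiableAt_id.div_const _)
  have hdiff : DifferentiableAt ℝ (hhat0 lam lam') 0 := by
    rw [hhat0_eq_sinc_div_sinc hlam hlam']
    exact (hsinc lam).div (hsinc lam') (by simp)
  have hodd := deriv_hhat0_neg lam lam' 0
  rw [neg_zero, self_eq_neg] at hodd
  simpa only [hodd] using hdiff.hasDerivAt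

lemma hasDerivAt_hhat0_sinWronskian (hlam : lam ≠ 0) (hs : Real.sin (ω / (2 * lam')) ≠ 0) :
    HasDerivAt (hhat0 lam lam')
      (lam / (2 * lam' ^ 2) *
        (sinWronskian (lam' / lam) (ω / (2 * lam')) / Real.sin (ω / (2 * lam')) ^ 2)) ω := by
  have hω : ω ≠ 0 := by rintro rfl; simp at hs
  have hlam' : lam' ≠ 0 := by rintro rfl; simp at hs
  have heq : hhat0 lam lam' =ᶠ[nhds ω] fun x ↦
      lam / lam' * (Real.sin (lam' / lam * (x / (2 * lam'))) / Real.sin (x / (2 * lam'))) := by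
    filter_upwards [isOpen_ne.mem_nhds hω] with x hx
    exact hhat0_eq_sin_mul_div_sin hlam hlam' hx
  have harg : HasDerivAt (fun x ↦ x / (2 * lam')) (1 / (2 * lam')) ω :=
    (hasDerivAt_id ω).div_const _
  have hquot := ((hasDerivAt_sin_mul_div_sin (lam' / lam) hs).comp ω harg).const_mul (lam / lam')
  refine (hquot.congr_of_eventuallyEq heq).congr_deriv ?_
  field_simp

lemma hasDerivAt_hhat0 (hlam : lam ≠ 0) (hs : Real.sin (ω / (2 * lam')) ≠ 0) :
    HasDerivAt (hhat0 lam lam')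
      ((lam' * Real.sin (ω / (2 * lam')) * Real.cos (ω / (2 * lam))
          - lam * Real.sin (ω / (2 * lam)) * Real.cos (ω / (2 * lam')))
        / (2 * lam' ^ 2 * Real.sin (ω / (2 * lam')) ^ 2)) ω := by
  have hlam' : lam' ≠ 0 := by rintro rfl; simp at hs
  refine (hasDerivAt_hhat0_sinWronskian hlam hs).congr_deriv ?_
  have harg : lam' / lam * (ω / (2 * lam')) = ω / (2 * lam) := by field_simp
  rw [sinWronskian, harg, div_mul_div_comm]
  congr 1
  field_simp

lemma div_two_mul_mem_Ioc (hlam' : 0 < lam') (hω : ω ∈ Ioc 0 (lam' * π)) :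
    ω / (2 * lam') ∈ Ioc 0 (π / 2) := by
  refine ⟨div_pos hω.1 (by positivity), (div_le_iff₀ (by positivity)).2 ?_⟩
  linarith [hω.2]

lemma sin_div_two_mul_ne_zero (hlam' : 0 < lam') (hω : 0 < |ω|) (hωπ : |ω| ≤ lam' * π) :
    Real.sin (ω / (2 * lam')) ≠ 0 := by
  have hpos := sin_pos_of_mem_Ioc_pi_div_two (div_two_mul_mem_Ioc hlam' ⟨hω, hωπ⟩)
  rcases abs_choice ω with h | h <;> rw [h] at hpos
  · exact hpos.ne'
  · rw [neg_div, Real.sin_neg, neg_pos] at hpos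
    exact hpos.ne

lemma cos_mul_pi_div_two_mul_nonneg (hlam' : 0 < lam') (hle : lam' ≤ lam) :
    0 ≤ Real.cos (lam' * π / (2 * lam)) := by
  have hlam := hlam'.trans_le hle
  have harg : lam' * π / (2 * lam) ≤ π / 2 := by
    rw [mul_comm 2 lam, mul_div_mul_comm]
    exact mul_le_of_le_one_left Real.pi_div_two_pos.le ((div_le_one hlam).2 hle)
  exact Real.cos_nonneg_of_neg_pi_div_two_le_of_le
    ((neg_nonpos.2 Real.pi_div_two_pos.le).trans (by positivity)) harg

lemma abs_deriv_hhat0_le (hlam' : 0 < lam') (hle : lam' ≤ lam) (hω : |ω| ≤ lam' * π) :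
    |deriv (hhat0 lam lam') ω| ≤ Real.cos (lam' * π / (2 * lam)) / (2 * lam') := by
  have hlam := hlam'.trans_le hle
  rcases eq_or_ne ω 0 with rfl | h0
  · rw [(hasDerivAt_hhat0_zero hlam.ne' hlam'.ne').deriv, abs_zero]
    exact div_nonneg (cos_mul_pi_div_two_mul_nonneg hlam' hle) (by positivity)
  have hr : lam' / lam ∈ Icc 0 1 := ⟨by positivity, (div_le_one hlam).2 hle⟩
  have ht := div_two_mul_mem_Ioc hlam' ⟨abs_pos.2 h0, hω⟩
  rw [← abs_deriv_hhat0_abs, (hasDerivAt_hhat0_sinWronskian hlam.ne'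
    (sin_pos_of_mem_Ioc_pi_div_two ht).ne').deriv, abs_mul, abs_of_pos (by positivity)]
  calc lam / (2 * lam' ^ 2) *
        |sinWronskian (lam' / lam) (|ω| / (2 * lam')) / Real.sin (|ω| / (2 * lam')) ^ 2|
      ≤ lam / (2 * lam' ^ 2) * (lam' / lam * Real.cos (lam' / lam * (π / 2))) := by
        gcongr
        exact abs_sinWronskian_div_sin_sq_le hr ht
    _ = Real.cos (lam' * π / (2 * lam)) / (2 * lam') := by
        rw [div_mul_div_comm lam' lam π 2, mul_comm lam 2]
        field_simp

lemma deriv_hhat0_mul_pi (hlam : lam ≠ 0) (hlam' : lam' ≠ 0) :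
    deriv (hhat0 lam lam') (lam' * π) = Real.cos (lam' * π / (2 * lam)) / (2 * lam') := by
  have harg : lam' * π / (2 * lam') = π / 2 := by field_simp
  rw [(hasDerivAt_hhat0 hlam (by simp [harg])).deriv, harg, Real.sin_pi_div_two,
    Real.cos_pi_div_two]
  field_simp
  ring

lemma abs_deriv_hhat0_mul_pi (hlam' : 0 < lam') (hle : lam' ≤ lam) :
    |deriv (hhat0 lam lam') (lam' * π)| = Real.cos (lam' * π / (2 * lam)) / (2 * lam') := by
  rw [deriv_hhat0_mul_pi (hlam'.trans_le hle).ne' hlam'.ne']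
  exact abs_of_nonneg (div_nonneg (cos_mul_pi_div_two_mul_nonneg hlam' hle) (by positivity))

end Hhat0

theorem hhat0_deriv_bound_general (lam lam' : ℝ) (h1 : 0 < lam') (h2 : lam' ≤ lam) :
    (∀ ω : ℝ, Real.sin (ω / (2 * lam')) ≠ 0 →
      HasDerivAt (hhat0 lam lam')
        ((lam' * Real.sin (ω / (2 * lam')) * Real.cos (ω / (2 * lam))
            - lam * Real.sin (ω / (2 * lam)) * Real.cos (ω / (2 * lam')))
          / (2 * lam' ^ 2 * Real.sin (ω / (2 * lam')) ^ 2)) ω) ∧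
    HasDerivAt (hhat0 lam lam') 0 0 ∧
    (∀ ω : ℝ, |ω| ≤ lam' * π →
      |deriv (hhat0 lam lam') ω| ≤ Real.cos (lam' * π / (2 * lam)) / (2 * lam')) ∧
    |deriv (hhat0 lam lam') (lam' * π)| = Real.cos (lam' * π / (2 * lam)) / (2 * lam') ∧
    |deriv (hhat0 lam lam') (-(lam' * π))| = Real.cos (lam' * π / (2 * lam)) / (2 * lam') := by
  have hlam : lam ≠ 0 := (h1.trans_le h2).ne'
  have hend := abs_deriv_hhat0_mul_pi h1 h2
  refine ⟨fun ω ↦ hasDerivAt_hhat0 hlam, hasDerivAt_hhat0_zero hlam h1.ne',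
    fun ω ↦ abs_deriv_hhat0_le h1 h2, hend, ?_⟩
  rwa [deriv_hhat0_neg, abs_neg]

/-- for `λ > λ' > 1` the derivative of `ĥ₀` is given (away from `ω = 0`)
by the formula
`(λ' sin(ω/(2λ')) cos(ω/(2λ)) − λ sin(ω/(2λ)) cos(ω/(2λ'))) / (2 λ'² sin²(ω/(2λ')))`
and satisfies `|ĥ₀'(ω)| ≤ 1/2` for `|ω| ≤ λ'π`; in particular
`|ĥ₀'(±λ'π)| = cos(λ'π/(2λ))/(2λ') ≤ 1/2`. -/
theorem hhat0_deriv_bound (lam lam' : ℝ) (h1 : 1 < lam') (h2 : lam' < lam) :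
    (∀ ω : ℝ, 0 < |ω| → |ω| ≤ lam' * π →
      deriv (hhat0 lam lam') ω =
        (lam' * Real.sin (ω / (2 * lam')) * Real.cos (ω / (2 * lam))
            - lam * Real.sin (ω / (2 * lam)) * Real.cos (ω / (2 * lam')))
          / (2 * lam' ^ 2 * Real.sin (ω / (2 * lam')) ^ 2)) ∧
    (∀ ω : ℝ, |ω| ≤ lam' * π → |deriv (hhat0 lam lam') ω| ≤ 1 / 2) ∧
    |deriv (hhat0 lam lam') (lam' * π)| = Real.cos (lam' * π / (2 * lam)) / (2 * lam') ∧
    |deriv (hhat0 lam lam') (-(lam' * π))| = Real.cos (lam' * π / (2 * lam)) / (2 * lam') ∧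
    Real.cos (lam' * π / (2 * lam)) / (2 * lam') ≤ 1 / 2 := by
  obtain ⟨hderiv, -, hbound, hpos, hneg⟩ := hhat0_deriv_bound_general lam lam' (by linarith) h2.le
  have hmax : Real.cos (lam' * π / (2 * lam)) / (2 * lam') ≤ 1 / 2 :=
    div_le_div₀ zero_le_one (Real.cos_le_one _) two_pos (by linarith)
  exact ⟨fun ω h0 h ↦ (hderiv ω (sin_div_two_mul_ne_zero (by linarith) h0 h)).deriv,
    fun ω h ↦ (hbound ω h).trans hmax, hpos, hneg, hmax⟩
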